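/- Let Σ = {a_1, …, a_l} be a finite alphabet with l ≥ 2. Then there exist two distinct infinite strings α and β over Σ (namely α = (a_1)^ω and β = (a_2 a_3 ⋯ a_l)^ω) such that α ≤_mqi (a_1 a_2 ⋯ a_l)^ω and β ≤_mqi (a_1 a_2 ⋯ a_l)^ω, and for every computable infinite string γ over Σ, if α ≤_mqi γ and β ≤_mqi γ then γ ≡_mqi (a_1 a_2 ⋯ a_l)^ω. That is, [(a_1 ⋯ a_l)^ω]_mqi is the unique recursive common upper bound of [α]_mqi and [β]_mqi under ≤_mqi. -/

import Mathlib

/-- An infinite string over an alphabet `Γ` is a function `ℕ → Γ`, with positions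
indexed from 1.  `IsQI C α β f` says that `f : ℕ → ℕ` is a `C`-quasi-isometry from
the string `α` to the string `β`: `C ≥ 1`, `f` maps positions (`≥ 1`) to positions,
`f` is color-preserving (`β (f x) = α x`), condition (a) holds (`f 1 ≤ C` and
`|f (x+1) − f x| ≤ C`), and condition (b) holds (`x + C < y → f x < f y`). -/
def IsQI {Γ : Type*} (C : ℕ) (α β : ℕ → Γ) (f : ℕ → ℕ) : Prop :=
  1 ≤ C ∧
  (∀ x, 1 ≤ x → 1 ≤ f x) ∧
  (∀ x, 1 ≤ x → β (f x) = α x) ∧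
  f 1 ≤ C ∧
  (∀ x, 1 ≤ x → |((f (x + 1) : ℤ)) - (f x : ℤ)| ≤ (C : ℤ)) ∧
  (∀ x y, 1 ≤ x → x + C < y → f x < f y)

/-- Quasi-isometric reducibility `α ≤_qi β`: some `C`-quasi-isometry from `α` to `β`
exists. -/
def QIred {Γ : Type*} (α β : ℕ → Γ) : Prop := ∃ C f, IsQI C α β f

/-- Many-one quasi-isometric reducibility `α ≤_mqi β`: some computable
`C`-quasi-isometry from `α` to `β` exists. -/
def MQIred {Γ : Type*} (α β : ℕ → Γ) : Prop :=
  ∃ C f, IsQI C α β f ∧ Computable f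

/-- One-one quasi-isometric reducibility `α ≤_1qi β`: some computable
`C`-quasi-isometry from `α` to `β` exists which is injective on positions. -/
def OQIred {Γ : Type*} (α β : ℕ → Γ) : Prop :=
  ∃ C f, IsQI C α β f ∧ Computable f ∧
    (∀ x y, 1 ≤ x → 1 ≤ y → f x = f y → x = y)

/-- Permutation quasi-isometric reducibility `α ≤_pqi β`: some computable
`C`-quasi-isometry from `α` to `β` exists which is a bijection on positions. -/
def PQIred {Γ : Type*} (α β : ℕ → Γ) : Prop :=
  ∃ C f, IsQI C α β f ∧ Computable f ∧
    (∀ x y, 1 ≤ x → 1 ≤ y → f x = f y → x = y) ∧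
    (∀ y, 1 ≤ y → ∃ x, 1 ≤ x ∧ f x = y)

/-- `α ≡_mqi β`. -/
def MQIequiv {Γ : Type*} (α β : ℕ → Γ) : Prop := MQIred α β ∧ MQIred β α

/-- `α ≡_1qi β`. -/
def OQIequiv {Γ : Type*} (α β : ℕ → Γ) : Prop := OQIred α β ∧ OQIred β α

/-- `α ≡_pqi β`. -/
def PQIequiv {Γ : Type*} (α β : ℕ → Γ) : Prop := PQIred α β ∧ PQIred β α

/-- The periodic string `(a_1 a_2 ⋯ a_l)^ω` over the alphabet `Fin l`
(identifying `a_i` with `i - 1 : Fin l`): position `n` carries letter `(n-1) % l`. -/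
def cycStr (l : ℕ) (hl : 0 < l) : ℕ → Fin l :=
  fun n => ⟨(n - 1) % l, Nat.mod_lt _ hl⟩

/-- The periodic string `(a_2 a_3 ⋯ a_l)^ω` over the alphabet `Fin l`. -/
def tailCycStr (l : ℕ) (hl : 1 < l) : ℕ → Fin l :=
  fun n => ⟨1 + (n - 1) % (l - 1), by
    have := Nat.mod_lt (n - 1) (show 0 < l - 1 by omega); omega⟩

/-!
A letter is *syndetic* in a string if it occurs in every window of some fixed length. If `γ` is
computable and every letter occurs in every window of length `D` of `γ`, then any computable `α`
reduces to `γ`: cut `γ` into consecutive blocks of length `D` and send `x` to the first occurrence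
of `α x` in the `x`-th block. So all computable strings in which every letter is syndetic are
mqi-equivalent, and `(a_1 ⋯ a_l)^ω` is one of them. Conversely, a quasi-isometry `f` moves by at
most `C` per step and tends to infinity, so it hits the image of an occurrence soon after it last
exceeds a given bound; hence it preserves syndeticity. An upper bound of `a_1^ω` and
`(a_2 ⋯ a_l)^ω` thus has all letters syndetic.
-/

open Filter

/-- The letter `a` is syndetic in `α`, i.e. occurs in it with bounded gaps: for some `D`, each
window `n + 1, …, n + D` of positions contains an occurrence. The windows start at `n + 1` since
position `0` is not part of the string. -/
def IsSyndetic {Γ : Type*} (α : ℕ → Γ) (a : Γ) : Prop :=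
  ∃ D, ∀ n, ∃ k < D, α (n + 1 + k) = a

section QuasiIsometry

variable {Γ : Type*} {α β : ℕ → Γ} {C : ℕ} {f : ℕ → ℕ}

theorem MQIred.qired (h : MQIred α β) : QIred α β :=
  let ⟨C, f, hf, _⟩ := h
  ⟨C, f, hf⟩

theorem IsQI.apply_add_le (h : IsQI C α β f) {x : ℕ} (hx : 1 ≤ x) (m : ℕ) :
    f (x + m) ≤ f x + m * C := by
  obtain ⟨-, -, -, -, hstep, -⟩ := h
  induction m with
  | zero => simp
  | succ m ih =>
    have hlast := (abs_le.1 (hstep (x + m) (by omega))).2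
    rw [add_one_mul, ← add_assoc x]
    omega

theorem IsQI.tendsto_atTop (h : IsQI C α β f) : Tendsto f atTop atTop := by
  obtain ⟨-, -, -, -, -, hmono⟩ := h
  refine tendsto_atTop_atTop.2 fun n => ?_
  induction n with
  | zero => exact ⟨0, fun _ _ => Nat.zero_le _⟩
  | succ n ih =>
    obtain ⟨X, hX⟩ := ih
    refine ⟨X + 1 + C + 1, fun x hx => ?_⟩
    have hlow : n ≤ f (X + 1) := hX (X + 1) (by omega)
    have hlt : f (X + 1) < f x := hmono (X + 1) x (by omega) (by omega)
    omega

theorem IsQI.exists_forall_lt_apply_and_apply_le (h : IsQI C α β f) (n : ℕ) :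
    ∃ X, ∀ m, n < f (X + 1 + m) ∧ f (X + 1 + m) ≤ n + (m + 1) * C := by
  classical
  -- The least such `X` is the last position with `f X ≤ n`, or `0` if there is none.
  have hev : ∃ X, ∀ x > X, n < f x :=
    (h.tendsto_atTop.eventually_gt_atTop n).exists_forall_of_atTop.imp
      fun _ hX x hx => hX x hx.le
  have hstart : f (Nat.find hev + 1) ≤ n + C := by
    cases hX : Nat.find hev with
    | zero => exact h.2.2.2.1.trans (Nat.le_add_left C n)
    | succ X =>
      have hsmall : f (X + 1) ≤ n := by
        by_contra! hlt
        refine Nat.find_min hev (m := X) (by omega) fun x hx => ?_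
        obtain rfl | hx := (Nat.succ_le_of_lt hx).eq_or_lt
        · exact hlt
        · exact Nat.find_spec hev x (hX ▸ hx)
      have hstep := h.apply_add_le (Nat.le_add_left 1 X) 1
      omega
  refine ⟨Nat.find hev, fun m => ⟨Nat.find_spec hev _ (by omega), ?_⟩⟩
  calc f (Nat.find hev + 1 + m)
      ≤ f (Nat.find hev + 1) + m * C := h.apply_add_le (Nat.le_add_left 1 _) m
    _ ≤ n + C + m * C := Nat.add_le_add_right hstart _
    _ = n + (m + 1) * C := by ring

theorem IsSyndetic.of_qired {a : Γ} (ha : IsSyndetic α a) (h : QIred α β) : IsSyndetic β a := by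
  obtain ⟨D, hD⟩ := ha
  obtain ⟨C, f, hf⟩ := h
  refine ⟨D * C, fun n => ?_⟩
  obtain ⟨X, hX⟩ := hf.exists_forall_lt_apply_and_apply_le n
  obtain ⟨k, hk, hαk⟩ := hD X
  obtain ⟨hlt, hle⟩ := hX k
  have hgap : (k + 1) * C ≤ D * C := Nat.mul_le_mul_right C hk
  refine ⟨f (X + 1 + k) - (n + 1), by omega, ?_⟩
  rw [Nat.add_sub_of_le hlt, hf.2.2.1 _ (by omega), hαk]

theorem isQI_block {D : ℕ} {r : ℕ → ℕ} (hr : ∀ x, r x < D)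
    (hcol : ∀ x, β (D * (x - 1) + 1 + r x) = α x) :
    IsQI (2 * D) α β (fun x => D * (x - 1) + 1 + r x) := by
  have hD : 0 < D := (Nat.zero_le _).trans_lt (hr 0)
  refine ⟨by omega, fun x _ => by dsimp only; omega, fun x _ => hcol x, ?_, ?_, ?_⟩
  · have := hr 1
    simp only [Nat.sub_self, Nat.mul_zero]
    omega
  · intro x hx
    obtain ⟨i, rfl⟩ := Nat.exists_eq_add_of_le' hx
    have := hr (i + 1)
    have := hr (i + 1 + 1)
    simp only [Nat.add_sub_cancel, Nat.mul_add_one]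
    rw [abs_le]
    omega
  · intro x y hx hxy
    have hblock : D * (x - 1) + D ≤ D * (y - 1) := by
      rw [← Nat.mul_add_one]
      exact Nat.mul_le_mul_left D (by omega)
    have := hr x
    dsimp only
    omega

end QuasiIsometry

section Universality

variable {Γ : Type*} [Finite Γ]

theorem exists_forall_exists_lt_of_forall_isSyndetic {γ : ℕ → Γ} (h : ∀ a, IsSyndetic γ a) :
    ∃ D, ∀ a n, ∃ k < D, γ (n + 1 + k) = a := by
  choose d hd using h
  obtain ⟨D, hD⟩ := Finite.exists_le d
  refine ⟨D, fun a n => ?_⟩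
  obtain ⟨k, hk, hγk⟩ := hd a n
  exact ⟨k, hk.trans_le (hD a), hγk⟩

theorem MQIred.of_forall_isSyndetic [Primcodable Γ] {α γ : ℕ → Γ} (hα : Computable α)
    (hγ : Computable γ) (h : ∀ a, IsSyndetic γ a) : MQIred α γ := by
  classical
  obtain ⟨D, hD⟩ := exists_forall_exists_lt_of_forall_isSyndetic h
  have hex (x : ℕ) : ∃ k, γ (D * (x - 1) + 1 + k) = α x :=
    (hD (α x) (D * (x - 1))).imp fun _ => And.right
  have hlt (x : ℕ) : Nat.find (hex x) < D := by
    obtain ⟨k, hk, hγk⟩ := hD (α x) (D * (x - 1))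
    exact (Nat.find_min' (hex x) hγk).trans_lt hk
  have hstart : Primrec fun x : ℕ => D * (x - 1) + 1 :=
    Primrec.succ.comp (Primrec.nat_mul.comp (Primrec.const D) Primrec.pred)
  have hmatch : ComputablePred fun p : ℕ × ℕ => γ (D * (p.1 - 1) + 1 + p.2) = α p.1 :=
    (Primrec.eq.decide.to_comp.comp
      (hγ.comp (Primrec.nat_add.comp (hstart.comp Primrec.fst) Primrec.snd).to_comp)
      (hα.comp Computable.fst)).computablePred
  exact ⟨2 * D, _, isQI_block hlt fun x => Nat.find_spec (hex x),
    Primrec.nat_add.to_comp.comp hstart.to_comp (Computable.find hmatch hex)⟩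

end Universality

section PeriodicStrings

theorem isSyndetic_const {Γ : Type*} (a : Γ) : IsSyndetic (fun _ => a) a :=
  ⟨1, fun _ => ⟨0, Nat.one_pos, rfl⟩⟩

theorem exists_lt_add_mod_eq {p r : ℕ} (hr : r < p) (n : ℕ) : ∃ k < p, (n + k) % p = r := by
  have : NeZero p := ⟨by omega⟩
  refine ⟨((r : ZMod p) - n).val, ZMod.val_lt _, ?_⟩
  rw [← ZMod.val_natCast, Nat.cast_add, ZMod.natCast_zmod_val, add_sub_cancel,
    ZMod.val_cast_of_lt hr]

variable {l : ℕ}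

theorem isSyndetic_cycStr (hl : 0 < l) (a : Fin l) : IsSyndetic (cycStr l hl) a := by
  refine ⟨l, fun n => ?_⟩
  obtain ⟨k, hk, hmod⟩ := exists_lt_add_mod_eq a.isLt n
  refine ⟨k, hk, Fin.ext ?_⟩
  simpa only [cycStr, Nat.add_right_comm n 1 k, Nat.add_sub_cancel] using hmod

theorem isSyndetic_tailCycStr (hl : 1 < l) {a : Fin l} (ha : 0 < a.val) :
    IsSyndetic (tailCycStr l hl) a := by
  refine ⟨l - 1, fun n => ?_⟩
  obtain ⟨k, hk, hmod⟩ := exists_lt_add_mod_eq (p := l - 1) (r := a.val - 1) (by omega) n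
  refine ⟨k, hk, Fin.ext ?_⟩
  simp only [tailCycStr, Nat.add_right_comm n 1 k, Nat.add_sub_cancel, hmod]
  exact Nat.add_sub_of_le ha

theorem computable_cycStr (hl : 0 < l) : Computable (cycStr l hl) :=
  (Primrec.fin_val_iff.1 (Primrec.nat_mod.comp Primrec.pred (Primrec.const l))).to_comp

theorem computable_tailCycStr (hl : 1 < l) : Computable (tailCycStr l hl) :=
  (Primrec.fin_val_iff.1 (Primrec.nat_add.comp (Primrec.const 1)
    (Primrec.nat_mod.comp Primrec.pred (Primrec.const (l - 1))))).to_comp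

theorem tailCycStr_val_pos (hl : 1 < l) (n : ℕ) : 0 < (tailCycStr l hl n).val :=
  Nat.add_pos_left Nat.one_pos _

theorem MQIred.cycStr_of_computable (hl : 0 < l) {γ : ℕ → Fin l} (hγ : Computable γ) :
    MQIred γ (cycStr l hl) :=
  .of_forall_isSyndetic hγ (computable_cycStr hl) (isSyndetic_cycStr hl)

end PeriodicStrings

theorem mqi_join_is_top_general (l : ℕ) (hl : 1 < l) :
    (fun _ : ℕ => (⟨0, Nat.zero_lt_of_lt hl⟩ : Fin l)) ≠ tailCycStr l hl ∧
    MQIred (fun _ : ℕ => (⟨0, Nat.zero_lt_of_lt hl⟩ : Fin l)) (cycStr l (Nat.zero_lt_of_lt hl)) ∧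
    MQIred (tailCycStr l hl) (cycStr l (Nat.zero_lt_of_lt hl)) ∧
    (∀ γ : ℕ → Fin l, Computable γ →
      QIred (fun _ : ℕ => (⟨0, Nat.zero_lt_of_lt hl⟩ : Fin l)) γ →
      QIred (tailCycStr l hl) γ →
      MQIequiv γ (cycStr l (Nat.zero_lt_of_lt hl))) := by
  refine ⟨fun h => ?_, .cycStr_of_computable _ (Computable.const _),
    .cycStr_of_computable _ (computable_tailCycStr hl), fun γ hγ hα hβ => ?_⟩
  · exact (tailCycStr_val_pos hl 1).ne (congrArg Fin.val (congrFun h 1))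
  · have hsynd (a : Fin l) : IsSyndetic γ a := by
      obtain ha | ha := Nat.eq_zero_or_pos a.val
      · rw [show a = ⟨0, Nat.zero_lt_of_lt hl⟩ from Fin.ext ha]
        exact (isSyndetic_const _).of_qired hα
      · exact (isSyndetic_tailCycStr hl ha).of_qired hβ
    exact ⟨.cycStr_of_computable _ hγ,
      .of_forall_isSyndetic (computable_cycStr _) hγ hsynd⟩

/-- For an alphabet `{a_1, …, a_l}` with `l ≥ 2`, the two distinct
strings `α = a_1^ω` and `β = (a_2 ⋯ a_l)^ω` are both mqi-reducible to
`(a_1 ⋯ a_l)^ω`, and every computable string `γ` with `α ≤_mqi γ` and `β ≤_mqi γ`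
satisfies `γ ≡_mqi (a_1 ⋯ a_l)^ω`: the mqi-degree of `(a_1 ⋯ a_l)^ω` is the unique
recursive common upper bound of the mqi-degrees of `α` and `β`. -/
theorem mqi_join_is_top (l : ℕ) (hl : 2 ≤ l) :
    (fun _ : ℕ => (⟨0, by omega⟩ : Fin l)) ≠ tailCycStr l (by omega) ∧
    MQIred (fun _ : ℕ => (⟨0, by omega⟩ : Fin l)) (cycStr l (by omega)) ∧
    MQIred (tailCycStr l (by omega)) (cycStr l (by omega)) ∧
    (∀ γ : ℕ → Fin l, Computable γ →
      MQIred (fun _ : ℕ => (⟨0, by omega⟩ : Fin l)) γ →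
      MQIred (tailCycStr l (by omega)) γ →
      MQIequiv γ (cycStr l (by omega))) := by
  obtain ⟨hne, hα, hβ, htop⟩ := mqi_join_is_top_general l hl
  exact ⟨hne, hα, hβ, fun γ hγ hαγ hβγ => htop γ hγ hαγ.qired hβγ.qired⟩
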